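/- arXiv:2102.07091 — 5 statements merged into one kernel-verified Lean document; each statement's English description precedes it below -/
import Mathlib

section
/- Let r ≤ d, let x be a real d×r matrix with xᵀx = I_r, and let ξ be a real d×r matrix with xᵀξ + ξᵀx = 0. Set Q := (x+ξ)(I_r + ξᵀξ)^{-1/2}. Then for every real d×r matrix U with UᵀU = I_r one has ‖(x+ξ) − Q‖_F ≤ ‖(x+ξ) − U‖_F; that is, the polar factor Q is the orthogonal projection of x+ξ onto the Stiefel manifold St(d,r). -/
open Matrix

/-- Frobenius norm of a real matrix. -/
noncomputable def frobNorm {m n : ℕ} (A : Matrix (Fin m) (Fin n) ℝ) : ℝ :=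
  Real.sqrt (∑ i, ∑ j, (A i j) ^ 2)

/-! If `Y = Q * S` with `S` positive semidefinite and `U`, `Q` have the same Gram matrix, then
`‖Y - U‖² = ‖Y - Q‖² + tr ((Q - U) S (Q - U)ᴴ)`, and the last term is nonnegative.
For `Y = x + ξ` with `ξ` tangent at `x` the cross terms of `Yᵀ * Y` cancel, leaving
`1 + ξᵀ * ξ = S * S`, so `Q = Y * S⁻¹` has orthonormal columns. -/

section Identities

variable {m n R : Type*} [Fintype m]

theorem transpose_mul_self_add_of_tangent [NonUnitalNonAssocSemiring R] {x ξ : Matrix m n R}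
    (h : xᵀ * ξ + ξᵀ * x = 0) : (x + ξ)ᵀ * (x + ξ) = xᵀ * x + ξᵀ * ξ := by
  calc (x + ξ)ᵀ * (x + ξ) = xᵀ * x + ξᵀ * ξ + (xᵀ * ξ + ξᵀ * x) := by
        rw [transpose_add, Matrix.add_mul, Matrix.mul_add, Matrix.mul_add]; abel
    _ = xᵀ * x + ξᵀ * ξ := by rw [h, add_zero]

theorem trace_conjTranspose_mul_self_mul_sub [Fintype n] [CommRing R] [StarRing R]
    {Q U : Matrix m n R} {S : Matrix n n R} (hS : S.IsHermitian)
    (hQU : Qᴴ * Q = Uᴴ * U) :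
    ((Q * S - U)ᴴ * (Q * S - U)).trace =
      ((Q * S - Q)ᴴ * (Q * S - Q)).trace + ((Q - U) * S * (Q - U)ᴴ).trace := by
  have expand (V : Matrix m n R) : ((Q * S - V)ᴴ * (Q * S - V)).trace =
      (S * (Qᴴ * Q) * S).trace - (S * (Qᴴ * V)).trace - (S * (Vᴴ * Q)).trace
        + (Vᴴ * V).trace := by
    rw [trace_mul_comm S (Vᴴ * Q)]
    simp only [conjTranspose_sub, conjTranspose_mul, hS.eq, Matrix.sub_mul, Matrix.mul_sub,
      trace_sub, Matrix.mul_assoc]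
    ring
  have cross : ((Q - U) * S * (Q - U)ᴴ).trace =
      (S * (Qᴴ * Q)).trace - (S * (Qᴴ * U)).trace - (S * (Uᴴ * Q)).trace
        + (S * (Uᴴ * U)).trace := by
    rw [Matrix.mul_assoc, trace_mul_comm, Matrix.mul_assoc]
    simp only [conjTranspose_sub, Matrix.sub_mul, Matrix.mul_sub, trace_sub]
    ring
  rw [expand U, expand Q, cross, ← hQU]
  ring

theorem conjTranspose_mul_self_mul_inv [Fintype n] [DecidableEq n] [CommRing R] [StarRing R]
    {Y : Matrix m n R} {S : Matrix n n R} (hS : S.IsHermitian) (hdet : IsUnit S.det)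
    (hSS : S * S = Yᴴ * Y) : (Y * S⁻¹)ᴴ * (Y * S⁻¹) = 1 := by
  calc (Y * S⁻¹)ᴴ * (Y * S⁻¹) = S⁻¹ * (Yᴴ * Y) * S⁻¹ := by
        rw [conjTranspose_mul, hS.inv.eq]; simp only [Matrix.mul_assoc]
    _ = 1 := by
        rw [← hSS, nonsing_inv_mul_cancel_left _ _ hdet, mul_nonsing_inv _ hdet]

end Identities

section Frobenius

open scoped Matrix.Norms.Frobenius ComplexOrder

theorem frobNorm_eq_norm {m n : ℕ} (A : Matrix (Fin m) (Fin n) ℝ) : frobNorm A = ‖A‖ := by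
  simp only [frobNorm, frobenius_norm_def, Real.sqrt_eq_rpow, Real.norm_eq_abs,
    Real.rpow_two, sq_abs]

variable {m n 𝕜 : Type*} [Fintype m] [Fintype n] [RCLike 𝕜]

theorem frobenius_norm_sq_eq_re_trace (A : Matrix m n 𝕜) :
    ‖A‖ ^ 2 = RCLike.re (Aᴴ * A).trace := by
  calc ‖A‖ ^ 2 = ∑ i, ∑ j, ‖A i j‖ ^ 2 := by
        rw [frobenius_norm_def, ← Real.sqrt_eq_rpow, Real.sq_sqrt (by positivity)]
        simp only [Real.rpow_two]
    _ = ∑ j, ∑ i, ‖A i j‖ ^ 2 := Finset.sum_comm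
    _ = RCLike.re (Aᴴ * A).trace := by
        simp only [trace, diag_apply, mul_apply, conjTranspose_apply, RCLike.star_def,
          RCLike.conj_mul, map_sum, ← RCLike.ofReal_pow, RCLike.ofReal_re]

theorem frobenius_norm_mul_sub_self_le {Q U : Matrix m n 𝕜} {S : Matrix n n 𝕜}
    (hS : S.PosSemidef) (hQU : Qᴴ * Q = Uᴴ * U) : ‖Q * S - Q‖ ≤ ‖Q * S - U‖ := by
  have gap_nonneg : 0 ≤ RCLike.re ((Q - U) * S * (Q - U)ᴴ).trace :=
    (RCLike.nonneg_iff.mp (hS.mul_mul_conjTranspose_same (Q - U)).trace_nonneg).1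
  refine (sq_le_sq₀ (norm_nonneg _) (norm_nonneg _)).mp ?_
  rw [frobenius_norm_sq_eq_re_trace, frobenius_norm_sq_eq_re_trace,
    trace_conjTranspose_mul_self_mul_sub hS.isHermitian hQU, map_add]
  exact le_add_of_nonneg_right gap_nonneg

theorem polar_factor_is_projection_general [DecidableEq n] {Y U : Matrix m n 𝕜}
    {S : Matrix n n 𝕜} (hS : S.PosDef) (hSS : S * S = Yᴴ * Y) (hU : Uᴴ * U = 1) :
    ‖Y - Y * S⁻¹‖ ≤ ‖Y - U‖ := by
  have hdet : IsUnit S.det := (isUnit_iff_isUnit_det S).mp hS.isUnit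
  have hY : Y * S⁻¹ * S = Y := nonsing_inv_mul_cancel_right _ _ hdet
  have hQU : (Y * S⁻¹)ᴴ * (Y * S⁻¹) = Uᴴ * U :=
    (conjTranspose_mul_self_mul_inv hS.isHermitian hdet hSS).trans hU.symm
  simpa only [hY] using frobenius_norm_mul_sub_self_le hS.posSemidef hQU

end Frobenius

/-- **The polar factor is the orthogonal projection onto the Stiefel manifold.**
If `x ∈ St(d,r)`, `ξ` is tangent at `x`, and `S` is the (unique) positive definite
square root of `I + ξᵀξ`, then the polar factor `Q = (x+ξ) S⁻¹` is a closest point of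
`St(d,r)` to `x + ξ` in the Frobenius norm. -/
theorem polar_factor_is_projection
    (d r : ℕ) (hdr : r ≤ d) (x ξ : Matrix (Fin d) (Fin r) ℝ)
    (hx : xᵀ * x = 1) (hξ : xᵀ * ξ + ξᵀ * x = 0) :
    ∀ S : Matrix (Fin r) (Fin r) ℝ, S.PosDef → S * S = 1 + ξᵀ * ξ →
      ∀ U : Matrix (Fin d) (Fin r) ℝ, Uᵀ * U = 1 →
        frobNorm ((x + ξ) - (x + ξ) * S⁻¹) ≤ frobNorm ((x + ξ) - U) := by
  intro S hS hSS U hU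
  have gram : S * S = (x + ξ)ᵀ * (x + ξ) := by
    rw [hSS, transpose_mul_self_add_of_tangent hξ, hx]
  rw [← conjTranspose_eq_transpose_of_trivial] at gram hU
  rw [frobNorm_eq_norm, frobNorm_eq_norm]
  exact polar_factor_is_projection_general hS gram hU
end

section
/- Let r ≤ d, let x, y be real d×r matrices with xᵀx = I_r and yᵀy = I_r, and let N be any real d×r matrix. Then ‖x(xᵀN + Nᵀx) − y(yᵀN + Nᵀy)‖_F ≤ 4 ‖N‖₂ ‖x − y‖_F, where ‖N‖₂ is the spectral norm of N. Equivalently, the normal-space projections satisfy ‖P_{N_x}(N) − P_{N_y}(N)‖_F ≤ 2 ‖N‖₂ ‖x − y‖_F, where P_{N_x}(z) := (1/2)x(xᵀz + zᵀx). -/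
open Matrix

/-- Spectral (operator) norm of a real matrix. -/
noncomputable def specNorm {m n : ℕ} (A : Matrix (Fin m) (Fin n) ℝ) : ℝ :=
  ‖LinearMap.toContinuousLinearMap (Matrix.toEuclideanLin A)‖

/-!
Write `x * u - y * v = x * (u - v) + (x - y) * v` with `u = xᴴ * N + Nᴴ * x` and
`v = yᴴ * N + Nᴴ * y`. As `u` is real-linear in `x`, both terms are controlled by the mixed bounds
`‖A * B‖_F ≤ ‖A‖₂ * ‖B‖_F` and `‖A * B‖_F ≤ ‖A‖_F * ‖B‖₂`, with Lipschitz constant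
`2 * (‖x‖₂ + ‖y‖₂) * ‖N‖₂`. Orthonormal columns give `‖x‖₂ ≤ 1` and `‖y‖₂ ≤ 1`.
-/

section Frobenius

open scoped Matrix.Norms.Frobenius

variable {α m n : Type*} [SeminormedAddCommGroup α] [Fintype m] [Fintype n]

/-- The Frobenius norm of a matrix. Mathlib has it only as an instance of `Norm`; as a function it
can be mixed with the `L²` operator norm, for which `‖·‖` is reserved below. -/
noncomputable def frobeniusNorm (A : Matrix m n α) : ℝ := ‖A‖

lemma frobeniusNorm_nonneg (A : Matrix m n α) : 0 ≤ frobeniusNorm A := norm_nonneg A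

lemma frobeniusNorm_add_le (A B : Matrix m n α) :
    frobeniusNorm (A + B) ≤ frobeniusNorm A + frobeniusNorm B :=
  norm_add_le A B

lemma frobeniusNorm_smul {R : Type*} [SeminormedRing R] [Module R α] [NormSMulClass R α] (c : R)
    (A : Matrix m n α) : frobeniusNorm (c • A) = ‖c‖ * frobeniusNorm A :=
  norm_smul c A

lemma frobeniusNorm_conjTranspose [StarAddMonoid α] [NormedStarGroup α] (A : Matrix m n α) :
    frobeniusNorm Aᴴ = frobeniusNorm A :=
  frobenius_norm_conjTranspose A

lemma frobeniusNorm_eq_sqrt (A : Matrix m n α) :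
    frobeniusNorm A = √(∑ i, ∑ j, ‖A i j‖ ^ 2) := by
  simp only [frobeniusNorm, frobenius_norm_def, Real.sqrt_eq_rpow, Real.rpow_two]

lemma frobeniusNorm_sq_eq_sum_norm_col_sq (A : Matrix m n α) :
    frobeniusNorm A ^ 2 = ∑ j, ‖WithLp.toLp 2 (A.col j)‖ ^ 2 := by
  rw [frobeniusNorm_eq_sqrt, Real.sq_sqrt (by positivity), Finset.sum_comm]
  simp only [PiLp.norm_sq_eq_of_L2, col_apply]

end Frobenius

section L2Operator

open scoped Matrix.Norms.L2Operator

variable {𝕜 l m n : Type*} [RCLike 𝕜] [Fintype l] [Fintype m] [Fintype n]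

lemma frobeniusNorm_mul_le_l2_opNorm_mul [DecidableEq m] (A : Matrix l m 𝕜) (B : Matrix m n 𝕜) :
    frobeniusNorm (A * B) ≤ ‖A‖ * frobeniusNorm B := by
  refine le_of_sq_le_sq ?_ (mul_nonneg (norm_nonneg A) (frobeniusNorm_nonneg B))
  calc frobeniusNorm (A * B) ^ 2
      = ∑ j, ‖WithLp.toLp 2 (A *ᵥ B.col j)‖ ^ 2 := frobeniusNorm_sq_eq_sum_norm_col_sq _
    _ ≤ ∑ j, (‖A‖ * ‖WithLp.toLp 2 (B.col j)‖) ^ 2 := by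
        gcongr with j
        exact l2_opNorm_mulVec A (WithLp.toLp 2 (B.col j))
    _ = (‖A‖ * frobeniusNorm B) ^ 2 := by
        simp only [mul_pow, frobeniusNorm_sq_eq_sum_norm_col_sq, Finset.mul_sum]

variable [DecidableEq n]

lemma l2_opNorm_le_one_of_conjTranspose_mul_self_eq_one {A : Matrix l n 𝕜} (hA : Aᴴ * A = 1) :
    ‖A‖ ≤ 1 := by
  refine (sq_le_one_iff₀ (norm_nonneg A)).mp ?_
  rw [sq, ← l2_opNorm_conjTranspose_mul_self, hA]
  exact IsStarProjection.norm_le 1 (.one _)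

lemma frobeniusNorm_mul_le_mul_l2_opNorm (A : Matrix l m 𝕜) (B : Matrix m n 𝕜) :
    frobeniusNorm (A * B) ≤ frobeniusNorm A * ‖B‖ := by
  classical
  have h := frobeniusNorm_mul_le_l2_opNorm_mul Bᴴ Aᴴ
  rwa [← conjTranspose_mul, frobeniusNorm_conjTranspose, frobeniusNorm_conjTranspose,
    l2_opNorm_conjTranspose, mul_comm] at h

lemma frobeniusNorm_mul_sub_mul_le [DecidableEq m] (x y : Matrix l m 𝕜) (u v : Matrix m n 𝕜) :
    frobeniusNorm (x * u - y * v) ≤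
      ‖x‖ * frobeniusNorm (u - v) + frobeniusNorm (x - y) * ‖v‖ := by
  have telescope : x * u - y * v = x * (u - v) + (x - y) * v := by
    rw [Matrix.mul_sub, Matrix.sub_mul, sub_add_sub_cancel]
  rw [telescope]
  exact (frobeniusNorm_add_le _ _).trans (add_le_add
    (frobeniusNorm_mul_le_l2_opNorm_mul x (u - v)) (frobeniusNorm_mul_le_mul_l2_opNorm (x - y) v))

lemma frobeniusNorm_conjTranspose_mul_add_le (A B : Matrix m n 𝕜) :
    frobeniusNorm (Aᴴ * B + Bᴴ * A) ≤ 2 * ‖B‖ * frobeniusNorm A := by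
  classical
  calc frobeniusNorm (Aᴴ * B + Bᴴ * A)
      ≤ frobeniusNorm (Aᴴ * B) + frobeniusNorm (Bᴴ * A) := frobeniusNorm_add_le _ _
    _ ≤ frobeniusNorm Aᴴ * ‖B‖ + ‖Bᴴ‖ * frobeniusNorm A :=
        add_le_add (frobeniusNorm_mul_le_mul_l2_opNorm _ _) (frobeniusNorm_mul_le_l2_opNorm_mul _ _)
    _ = 2 * ‖B‖ * frobeniusNorm A := by
        rw [frobeniusNorm_conjTranspose, l2_opNorm_conjTranspose]; ring

lemma l2_opNorm_conjTranspose_mul_add_le (A B : Matrix m n 𝕜) :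
    ‖Aᴴ * B + Bᴴ * A‖ ≤ 2 * ‖A‖ * ‖B‖ := by
  classical
  calc ‖Aᴴ * B + Bᴴ * A‖
      ≤ ‖Aᴴ‖ * ‖B‖ + ‖Bᴴ‖ * ‖A‖ :=
        norm_add_le_of_le (l2_opNorm_mul _ _) (l2_opNorm_mul _ _)
    _ = 2 * ‖A‖ * ‖B‖ := by
        rw [l2_opNorm_conjTranspose, l2_opNorm_conjTranspose]; ring

lemma frobeniusNorm_mul_conjTranspose_mul_add_sub_le (x y N : Matrix m n 𝕜) :
    frobeniusNorm (x * (xᴴ * N + Nᴴ * x) - y * (yᴴ * N + Nᴴ * y)) ≤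
      2 * (‖x‖ + ‖y‖) * ‖N‖ * frobeniusNorm (x - y) := by
  have linear_sub : (xᴴ * N + Nᴴ * x) - (yᴴ * N + Nᴴ * y) = (x - y)ᴴ * N + Nᴴ * (x - y) := by
    rw [conjTranspose_sub, Matrix.sub_mul, Matrix.mul_sub, add_sub_add_comm]
  calc frobeniusNorm (x * (xᴴ * N + Nᴴ * x) - y * (yᴴ * N + Nᴴ * y))
      ≤ ‖x‖ * frobeniusNorm ((x - y)ᴴ * N + Nᴴ * (x - y)) +
          frobeniusNorm (x - y) * ‖yᴴ * N + Nᴴ * y‖ :=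
        linear_sub ▸ frobeniusNorm_mul_sub_mul_le x y _ _
    _ ≤ ‖x‖ * (2 * ‖N‖ * frobeniusNorm (x - y)) + frobeniusNorm (x - y) * (2 * ‖y‖ * ‖N‖) :=
        add_le_add
          (mul_le_mul_of_nonneg_left (frobeniusNorm_conjTranspose_mul_add_le _ _) (norm_nonneg x))
          (mul_le_mul_of_nonneg_left (l2_opNorm_conjTranspose_mul_add_le _ _)
            (frobeniusNorm_nonneg _))
    _ = 2 * (‖x‖ + ‖y‖) * ‖N‖ * frobeniusNorm (x - y) := by ring

theorem normal_projection_lipschitz_general {K : ℝ} {x y : Matrix m n 𝕜} (hx : ‖x‖ ≤ K)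
    (hy : ‖y‖ ≤ K) (N : Matrix m n 𝕜) :
    frobeniusNorm (x * (xᴴ * N + Nᴴ * x) - y * (yᴴ * N + Nᴴ * y)) ≤
      4 * K * ‖N‖ * frobeniusNorm (x - y) ∧
    frobeniusNorm ((1 / 2 : ℝ) • (x * (xᴴ * N + Nᴴ * x)) -
        (1 / 2 : ℝ) • (y * (yᴴ * N + Nᴴ * y))) ≤
      2 * K * ‖N‖ * frobeniusNorm (x - y) := by
  have unscaled : frobeniusNorm (x * (xᴴ * N + Nᴴ * x) - y * (yᴴ * N + Nᴴ * y)) ≤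
      4 * K * ‖N‖ * frobeniusNorm (x - y) := by
    have coeff_le : 2 * (‖x‖ + ‖y‖) ≤ 4 * K := by linarith
    have := frobeniusNorm_nonneg (x - y)
    exact (frobeniusNorm_mul_conjTranspose_mul_add_sub_le x y N).trans (by gcongr)
  refine ⟨unscaled, ?_⟩
  rw [← smul_sub, frobeniusNorm_smul, Real.norm_of_nonneg (by norm_num)]
  linarith

end L2Operator

lemma frobNorm_eq_frobeniusNorm {m n : ℕ} (A : Matrix (Fin m) (Fin n) ℝ) :
    frobNorm A = frobeniusNorm A := by
  simp only [frobNorm, frobeniusNorm_eq_sqrt, Real.norm_eq_abs, sq_abs]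

open scoped Matrix.Norms.L2Operator in
lemma specNorm_eq_l2_opNorm {m n : ℕ} (A : Matrix (Fin m) (Fin n) ℝ) : specNorm A = ‖A‖ := rfl

/-- **Lipschitz bound for normal-space projections on the Stiefel manifold.**
For `x, y ∈ St(d,r)` and any `N ∈ ℝ^{d×r}`,
`‖x(xᵀN + Nᵀx) − y(yᵀN + Nᵀy)‖_F ≤ 4‖N‖₂‖x − y‖_F`, and equivalently for the
normal-space projections `P_{N_x}(N) = (1/2)x(xᵀN + Nᵀx)`,
`‖P_{N_x}(N) − P_{N_y}(N)‖_F ≤ 2‖N‖₂‖x − y‖_F`. -/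
theorem normal_projection_lipschitz
    (d r : ℕ) (hdr : r ≤ d) (x y N : Matrix (Fin d) (Fin r) ℝ)
    (hx : xᵀ * x = 1) (hy : yᵀ * y = 1) :
    frobNorm (x * (xᵀ * N + Nᵀ * x) - y * (yᵀ * N + Nᵀ * y)) ≤
      4 * specNorm N * frobNorm (x - y) ∧
    frobNorm ((1 / 2 : ℝ) • (x * (xᵀ * N + Nᵀ * x)) -
        (1 / 2 : ℝ) • (y * (yᵀ * N + Nᵀ * y))) ≤
      2 * specNorm N * frobNorm (x - y) := by
  simpa [frobNorm_eq_frobeniusNorm, specNorm_eq_l2_opNorm] using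
    normal_projection_lipschitz_general (l2_opNorm_le_one_of_conjTranspose_mul_self_eq_one hx)
      (l2_opNorm_le_one_of_conjTranspose_mul_self_eq_one hy) N
end

section
/- Let r ≤ d, let f : ℝ^{d×r} → ℝ be differentiable with gradient ∇f (i.e., for every z, the Fréchet derivative of f at z is h ↦ ⟨∇f(z), h⟩), assume ∇f is L-Lipschitz on ℝ^{d×r} with respect to the Frobenius norm, and assume ‖∇f(z)‖₂ ≤ L_n for every z with zᵀz = I_r. For x with xᵀx = I_r define the Riemannian gradient grad f(x) := ∇f(x) − (1/2)x(xᵀ∇f(x) + ∇f(x)ᵀx). Then for all x, y with xᵀx = I_r and yᵀy = I_r: |f(y) − f(x) − ⟨grad f(x), y − x⟩| ≤ ((L + L_n)/2) ‖y − x‖_F². -/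
open Matrix

attribute [local instance] Matrix.normedAddCommGroup Matrix.normedSpace

/-- Frobenius inner product `⟨A, B⟩ = trace (AᵀB)` of real matrices. -/
noncomputable def finner {m n : ℕ} (A B : Matrix (Fin m) (Fin n) ℝ) : ℝ :=
  (Aᵀ * B).trace

/-!
Along the segment from `x` to `y` the Lipschitz gradient gives the Euclidean descent estimate
`|f(y) − f(x) − ⟨∇f(x), D⟩| ≤ (L/2)‖D‖_F²` with `D = y − x`. Passing to the Riemannian gradient
costs `½⟨xS, D⟩` with `S = xᵀ∇f(x) + ∇f(x)ᵀx`. This is quadratic in `D`: since `S` is symmetric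
it only sees the symmetric part of `xᵀD`, and `xᵀx = yᵀy` makes this equal to `−½DᵀD`. Hence the
cost is `−½⟨∇f(x)Dᵀ, xDᵀ⟩`, at most `½‖∇f(x)‖₂‖D‖_F²` in absolute value.
-/

section Taylor

open Set

variable {E F : Type*} [NormedAddCommGroup E] [NormedSpace ℝ E]
  [NormedAddCommGroup F] [NormedSpace ℝ F]

theorem norm_image_sub_sub_deriv_le_of_norm_deriv_sub_le {g g' : ℝ → F} {a b K : ℝ}
    (hg : ∀ t ∈ Icc a b, HasDerivWithinAt g (g' t) (Icc a b) t)
    (bound : ∀ t ∈ Ico a b, ‖g' t - g' a‖ ≤ K * (t - a)) :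
    ∀ t ∈ Icc a b, ‖g t - g a - (t - a) • g' a‖ ≤ K / 2 * (t - a) ^ 2 := by
  have hrem : ∀ t ∈ Icc a b, HasDerivWithinAt (fun s ↦ g s - g a - (s - a) • g' a)
      (g' t - g' a) (Icc a b) t := fun t ht ↦ by
    simpa only [one_smul] using! ((hg t ht).sub_const (g a)).sub
      (((hasDerivWithinAt_id t _).sub_const a).smul_const (g' a))
  have hquad : ∀ t, HasDerivAt (fun s ↦ K / 2 * (s - a) ^ 2) (K * (t - a)) t := fun t ↦ by
    convert! (((hasDerivAt_id t).sub_const a).pow 2).const_mul (K / 2) using 1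
    simp only [id_eq]
    ring
  exact image_norm_le_of_norm_deriv_right_le_deriv_boundary
    (fun t ht ↦ (hrem t ht).continuousWithinAt)
    (fun t ht ↦ (hrem t (Ico_subset_Icc_self ht)).mono_of_mem_nhdsWithin
      (Icc_mem_nhdsGE_of_mem ht))
    (by simp) hquad bound

theorem norm_image_sub_sub_fderiv_le_of_segment {f : E → F} {f' : E → E →L[ℝ] F} {x y : E} {K : ℝ}
    (hf : ∀ z ∈ segment ℝ x y, HasFDerivWithinAt f (f' z) (segment ℝ x y) z)
    (bound : ∀ t ∈ Ico (0 : ℝ) 1,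
      ‖f' (AffineMap.lineMap x y t) (y - x) - f' x (y - x)‖ ≤ K * t) :
    ‖f y - f x - f' x (y - x)‖ ≤ K / 2 := by
  have hline : MapsTo (AffineMap.lineMap x y) (Icc (0 : ℝ) 1) (segment ℝ x y) :=
    fun t ht ↦ lineMap_mem_segment ℝ x y ht
  have hderiv : ∀ t ∈ Icc (0 : ℝ) 1, HasDerivWithinAt (f ∘ AffineMap.lineMap x y)
      (f' (AffineMap.lineMap x y t) (y - x)) (Icc 0 1) t := fun t ht ↦
    (hf _ (hline ht)).comp_hasDerivWithinAt t AffineMap.hasDerivWithinAt_lineMap hline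
  simpa using norm_image_sub_sub_deriv_le_of_norm_deriv_sub_le hderiv
    (by simpa using bound) 1 (right_mem_Icc.2 zero_le_one)

end Taylor

section Frobenius

variable {l m n : ℕ}

theorem finner_eq_inner_vec (A B : Matrix (Fin m) (Fin n) ℝ) :
    finner A B = inner ℝ (WithLp.toLp 2 A.vec) (WithLp.toLp 2 B.vec) := by
  rw [finner, ← vec_dotProduct_vec, EuclideanSpace.inner_toLp_toLp, star_trivial,
    dotProduct_comm]

theorem finner_comm (A B : Matrix (Fin m) (Fin n) ℝ) : finner A B = finner B A := by
  simp only [finner_eq_inner_vec, real_inner_comm]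

theorem finner_sub_left (A B C : Matrix (Fin m) (Fin n) ℝ) :
    finner (A - B) C = finner A C - finner B C := by
  simp only [finner_eq_inner_vec, vec_sub, WithLp.toLp_sub, inner_sub_left]

theorem finner_smul_left (c : ℝ) (A B : Matrix (Fin m) (Fin n) ℝ) :
    finner (c • A) B = c * finner A B := by
  simp only [finner_eq_inner_vec, vec_smul, WithLp.toLp_smul, real_inner_smul_left]

theorem finner_neg_left (A B : Matrix (Fin m) (Fin n) ℝ) : finner (-A) B = -finner A B := by
  simp only [finner_eq_inner_vec, vec_neg, WithLp.toLp_neg, inner_neg_left]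

theorem finner_mul_left (A : Matrix (Fin l) (Fin m) ℝ) (B : Matrix (Fin m) (Fin n) ℝ)
    (C : Matrix (Fin l) (Fin n) ℝ) : finner (A * B) C = finner B (Aᵀ * C) := by
  rw [finner, finner, transpose_mul, Matrix.mul_assoc]

theorem finner_mul_right (A : Matrix (Fin l) (Fin n) ℝ) (B : Matrix (Fin l) (Fin m) ℝ)
    (C : Matrix (Fin m) (Fin n) ℝ) : finner A (B * C) = finner (A * Cᵀ) B := by
  rw [finner, finner, transpose_mul, transpose_transpose, ← Matrix.mul_assoc,
    trace_mul_cycle]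

theorem finner_add_transpose_left {A B : Matrix (Fin n) (Fin n) ℝ} (hB : B.IsSymm) :
    finner (A + Aᵀ) B = 2 * finner A B := by
  have htrace : (A * B).trace = (Aᵀ * B).trace := by
    rw [← trace_transpose, transpose_mul, hB.eq, trace_mul_comm]
  rw [finner, finner, transpose_add, transpose_transpose, Matrix.add_mul, trace_add, htrace,
    two_mul]

theorem frobNorm_eq_norm_vec (A : Matrix (Fin m) (Fin n) ℝ) :
    frobNorm A = ‖WithLp.toLp 2 A.vec‖ := by
  simp only [frobNorm, EuclideanSpace.norm_eq, Real.norm_eq_abs, sq_abs, vec,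
    Fintype.sum_prod_type_right]

theorem frobNorm_nonneg (A : Matrix (Fin m) (Fin n) ℝ) : 0 ≤ frobNorm A :=
  Real.sqrt_nonneg _

theorem frobNorm_sq_eq_finner_self (A : Matrix (Fin m) (Fin n) ℝ) :
    frobNorm A ^ 2 = finner A A := by
  rw [frobNorm_eq_norm_vec, finner_eq_inner_vec, real_inner_self_eq_norm_sq]

theorem frobNorm_smul (c : ℝ) (A : Matrix (Fin m) (Fin n) ℝ) :
    frobNorm (c • A) = |c| * frobNorm A := by
  simp only [frobNorm_eq_norm_vec, vec_smul, WithLp.toLp_smul, norm_smul, Real.norm_eq_abs]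

theorem frobNorm_transpose (A : Matrix (Fin m) (Fin n) ℝ) : frobNorm Aᵀ = frobNorm A := by
  simp only [frobNorm, transpose_apply]
  rw [Finset.sum_comm]

theorem abs_finner_le_frobNorm_mul_frobNorm (A B : Matrix (Fin m) (Fin n) ℝ) :
    |finner A B| ≤ frobNorm A * frobNorm B := by
  simpa only [finner_eq_inner_vec, frobNorm_eq_norm_vec] using abs_real_inner_le_norm _ _

theorem frobNorm_sq_eq_sum_norm_col_sq (A : Matrix (Fin m) (Fin n) ℝ) :
    frobNorm A ^ 2 = ∑ j, ‖WithLp.toLp 2 (A.col j)‖ ^ 2 := by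
  simp only [frobNorm_eq_norm_vec, EuclideanSpace.norm_sq_eq, Fintype.sum_prod_type, vec,
    col_apply]

theorem specNorm_nonneg (A : Matrix (Fin m) (Fin n) ℝ) : 0 ≤ specNorm A :=
  norm_nonneg _

theorem norm_toLp_mulVec_le_specNorm_mul_norm (A : Matrix (Fin m) (Fin n) ℝ) (v : Fin n → ℝ) :
    ‖WithLp.toLp 2 (A *ᵥ v)‖ ≤ specNorm A * ‖WithLp.toLp 2 v‖ :=
  (toEuclideanLin A).toContinuousLinearMap.le_opNorm (WithLp.toLp 2 v)

theorem frobNorm_mul_le_specNorm_mul_frobNorm (A : Matrix (Fin l) (Fin m) ℝ)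
    (B : Matrix (Fin m) (Fin n) ℝ) : frobNorm (A * B) ≤ specNorm A * frobNorm B := by
  refine (sq_le_sq₀ (frobNorm_nonneg _) (mul_nonneg (specNorm_nonneg A) (frobNorm_nonneg B))).mp ?_
  calc
    frobNorm (A * B) ^ 2 = ∑ j, ‖WithLp.toLp 2 (A *ᵥ B.col j)‖ ^ 2 :=
      frobNorm_sq_eq_sum_norm_col_sq _
    _ ≤ ∑ j, (specNorm A * ‖WithLp.toLp 2 (B.col j)‖) ^ 2 := by
      gcongr
      exact norm_toLp_mulVec_le_specNorm_mul_norm A _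
    _ = (specNorm A * frobNorm B) ^ 2 := by
      simp only [mul_pow, frobNorm_sq_eq_sum_norm_col_sq B, Finset.mul_sum]

theorem frobNorm_mul_of_transpose_mul_self_eq_one {x : Matrix (Fin l) (Fin m) ℝ}
    (hx : xᵀ * x = 1) (B : Matrix (Fin m) (Fin n) ℝ) : frobNorm (x * B) = frobNorm B := by
  rw [← sq_eq_sq₀ (frobNorm_nonneg _) (frobNorm_nonneg _), frobNorm_sq_eq_finner_self,
    frobNorm_sq_eq_finner_self, finner_mul_left, ← Matrix.mul_assoc, hx, Matrix.one_mul]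

theorem abs_image_sub_sub_finner_le {f : Matrix (Fin m) (Fin n) ℝ → ℝ}
    {Df : Matrix (Fin m) (Fin n) ℝ → Matrix (Fin m) (Fin n) ℝ} {L : ℝ}
    {x y : Matrix (Fin m) (Fin n) ℝ}
    (hdiff : ∀ z ∈ segment ℝ x y, DifferentiableAt ℝ f z)
    (hgrad : ∀ z ∈ segment ℝ x y, ∀ h, fderiv ℝ f z h = finner (Df z) h)
    (hLip : ∀ z ∈ segment ℝ x y, frobNorm (Df z - Df x) ≤ L * frobNorm (z - x)) :
    |f y - f x - finner (Df x) (y - x)| ≤ L / 2 * frobNorm (y - x) ^ 2 := by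
  have hx := left_mem_segment ℝ x y
  have hincr : ∀ t ∈ Set.Ico (0 : ℝ) 1,
      ‖fderiv ℝ f (AffineMap.lineMap x y t) (y - x) - fderiv ℝ f x (y - x)‖ ≤
        L * frobNorm (y - x) ^ 2 * t := fun t ht ↦ by
    have hz := lineMap_mem_segment ℝ x y (Set.Ico_subset_Icc_self ht)
    set z := AffineMap.lineMap x y t with hz_def
    have hzx : frobNorm (z - x) = t * frobNorm (y - x) := by
      rw [hz_def, AffineMap.lineMap_apply_module', add_sub_cancel_right, frobNorm_smul,
        abs_of_nonneg ht.1]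
    calc
      ‖fderiv ℝ f z (y - x) - fderiv ℝ f x (y - x)‖ = |finner (Df z - Df x) (y - x)| := by
        rw [hgrad z hz, hgrad x hx, finner_sub_left, Real.norm_eq_abs]
      _ ≤ frobNorm (Df z - Df x) * frobNorm (y - x) := abs_finner_le_frobNorm_mul_frobNorm _ _
      _ ≤ L * frobNorm (z - x) * frobNorm (y - x) :=
        mul_le_mul_of_nonneg_right (hLip z hz) (frobNorm_nonneg _)
      _ = L * frobNorm (y - x) ^ 2 * t := by rw [hzx]; ring
  have htaylor : ‖f y - f x - fderiv ℝ f x (y - x)‖ ≤ L * frobNorm (y - x) ^ 2 / 2 :=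
    norm_image_sub_sub_fderiv_le_of_segment
      (fun z hz ↦ (hdiff z hz).hasFDerivAt.hasFDerivWithinAt) hincr
  rwa [hgrad x hx, Real.norm_eq_abs, mul_div_right_comm] at htaylor

end Frobenius

section Stiefel

/-- The orthogonal projection of `G` onto the tangent space of the Stiefel manifold at `x`, so that
`stiefelTangentProj x (∇f x)` is the Riemannian gradient of `f` at `x`. The formula is taken as the
definition for every matrix `x`, but is this projection only when `xᵀx = 1`. -/
noncomputable def stiefelTangentProj {m n : Type*} [Fintype m] [Fintype n] (x G : Matrix m n ℝ) :
    Matrix m n ℝ :=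
  G - (1 / 2 : ℝ) • (x * (xᵀ * G + Gᵀ * x))

theorem transpose_mul_sub_add_transpose {m n R : Type*} [Fintype m] [CommRing R]
    {x y : Matrix m n R} (h : xᵀ * x = yᵀ * y) :
    xᵀ * (y - x) + (xᵀ * (y - x))ᵀ = -((y - x)ᵀ * (y - x)) := by
  simp only [transpose_mul, transpose_sub, transpose_transpose, Matrix.mul_sub, Matrix.sub_mul, h]
  abel

variable {d r : ℕ} {x y : Matrix (Fin d) (Fin r) ℝ}

theorem finner_mul_transpose_mul_add_sub (h : xᵀ * x = yᵀ * y) (G : Matrix (Fin d) (Fin r) ℝ) :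
    finner (x * (xᵀ * G + Gᵀ * x)) (y - x) = -finner (G * (y - x)ᵀ) (x * (y - x)ᵀ) := by
  have hS : Gᵀ * x = (xᵀ * G)ᵀ := by rw [transpose_mul, transpose_transpose]
  have hsymm : (xᵀ * G + (xᵀ * G)ᵀ).IsSymm := isSymm_add_transpose_self _
  have hquad := transpose_mul_sub_add_transpose h
  set D := y - x
  have hDD : (Dᵀ * D).IsSymm := by
    rw [IsSymm, transpose_mul, transpose_transpose]
  have htwice : 2 * finner (x * (xᵀ * G + Gᵀ * x)) D = 2 * -finner (G * Dᵀ) (x * Dᵀ) := by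
    calc
      2 * finner (x * (xᵀ * G + Gᵀ * x)) D = 2 * finner (xᵀ * D) (xᵀ * G + (xᵀ * G)ᵀ) := by
        rw [finner_mul_left, finner_comm, hS]
      _ = finner (-(Dᵀ * D)) (xᵀ * G + (xᵀ * G)ᵀ) := by
        rw [← finner_add_transpose_left hsymm, hquad]
      _ = -(2 * finner (xᵀ * G) (Dᵀ * D)) := by
        rw [finner_neg_left, finner_comm, finner_add_transpose_left hDD]
      _ = 2 * -finner (G * Dᵀ) (x * Dᵀ) := by
        rw [finner_mul_left, transpose_transpose, ← Matrix.mul_assoc, finner_mul_right, mul_neg]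
  linarith

theorem finner_stiefelTangentProj_sub (h : xᵀ * x = yᵀ * y) (G : Matrix (Fin d) (Fin r) ℝ) :
    finner (stiefelTangentProj x G) (y - x) =
      finner G (y - x) + 1 / 2 * finner (G * (y - x)ᵀ) (x * (y - x)ᵀ) := by
  rw [stiefelTangentProj, finner_sub_left, finner_smul_left,
    finner_mul_transpose_mul_add_sub h, mul_neg, sub_neg_eq_add]

theorem abs_finner_mul_transpose_le {n : ℕ} (hx : xᵀ * x = 1) (G : Matrix (Fin d) (Fin r) ℝ)
    (D : Matrix (Fin n) (Fin r) ℝ) :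
    |finner (G * Dᵀ) (x * Dᵀ)| ≤ specNorm G * frobNorm D ^ 2 := by
  calc
    |finner (G * Dᵀ) (x * Dᵀ)| ≤ frobNorm (G * Dᵀ) * frobNorm (x * Dᵀ) :=
      abs_finner_le_frobNorm_mul_frobNorm _ _
    _ ≤ specNorm G * frobNorm D * frobNorm D := by
      rw [frobNorm_mul_of_transpose_mul_self_eq_one hx, frobNorm_transpose, ← frobNorm_transpose D]
      exact mul_le_mul_of_nonneg_right (frobNorm_mul_le_specNorm_mul_frobNorm G Dᵀ)
        (frobNorm_nonneg _)
    _ = specNorm G * frobNorm D ^ 2 := by ring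

theorem riemannian_lipschitz_function_values_general {f : Matrix (Fin d) (Fin r) ℝ → ℝ}
    {Df : Matrix (Fin d) (Fin r) ℝ → Matrix (Fin d) (Fin r) ℝ} {L : ℝ}
    (hx : xᵀ * x = 1) (hy : yᵀ * y = 1)
    (hdiff : ∀ z ∈ segment ℝ x y, DifferentiableAt ℝ f z)
    (hgrad : ∀ z ∈ segment ℝ x y, ∀ h, fderiv ℝ f z h = finner (Df z) h)
    (hLip : ∀ z ∈ segment ℝ x y, frobNorm (Df z - Df x) ≤ L * frobNorm (z - x)) :
    |f y - f x - finner (stiefelTangentProj x (Df x)) (y - x)| ≤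
      (L + specNorm (Df x)) / 2 * frobNorm (y - x) ^ 2 := by
  have hdescent := abs_image_sub_sub_finner_le hdiff hgrad hLip
  have hnormal := abs_finner_mul_transpose_le hx (Df x) (y - x)
  rw [finner_stiefelTangentProj_sub (hx.trans hy.symm), ← sub_sub]
  calc
    _ ≤ |f y - f x - finner (Df x) (y - x)| +
          |1 / 2 * finner (Df x * (y - x)ᵀ) (x * (y - x)ᵀ)| := abs_sub _ _
    _ = |f y - f x - finner (Df x) (y - x)| +
          1 / 2 * |finner (Df x * (y - x)ᵀ) (x * (y - x)ᵀ)| := by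
      rw [abs_mul, abs_of_pos (one_half_pos (α := ℝ))]
    _ ≤ L / 2 * frobNorm (y - x) ^ 2 + 1 / 2 * (specNorm (Df x) * frobNorm (y - x) ^ 2) := by
      gcongr
    _ = (L + specNorm (Df x)) / 2 * frobNorm (y - x) ^ 2 := by ring

end Stiefel

/-- **Riemannian Lipschitz-type inequality on the Stiefel manifold (function values).**
If `f` is differentiable with gradient `Df` (so the Fréchet derivative at `z` is
`h ↦ ⟨Df z, h⟩`), `Df` is `L`-Lipschitz in Frobenius norm on `ℝ^{d×r}` and
`‖Df z‖₂ ≤ Ln` on `St(d,r)`, then with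
`grad f x = Df x − (1/2)x(xᵀ Df x + (Df x)ᵀ x)` one has, for all `x, y ∈ St(d,r)`,
`|f(y) − f(x) − ⟨grad f x, y − x⟩| ≤ ((L + Ln)/2)‖y − x‖_F²`. -/
theorem riemannian_lipschitz_function_values
    (d r : ℕ) (hdr : r ≤ d) (L Ln : ℝ)
    (f : Matrix (Fin d) (Fin r) ℝ → ℝ) (Df : Matrix (Fin d) (Fin r) ℝ → Matrix (Fin d) (Fin r) ℝ)
    (hdiff : Differentiable ℝ f)
    (hgrad : ∀ z h, fderiv ℝ f z h = finner (Df z) h)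
    (hLip : ∀ a b, frobNorm (Df a - Df b) ≤ L * frobNorm (a - b))
    (hbound : ∀ z : Matrix (Fin d) (Fin r) ℝ, zᵀ * z = 1 → specNorm (Df z) ≤ Ln) :
    ∀ x y : Matrix (Fin d) (Fin r) ℝ, xᵀ * x = 1 → yᵀ * y = 1 →
      |f y - f x -
          finner (Df x - (1 / 2 : ℝ) • (x * (xᵀ * Df x + (Df x)ᵀ * x))) (y - x)| ≤
        ((L + Ln) / 2) * (frobNorm (y - x)) ^ 2 := fun x y hx hy ↦
  (riemannian_lipschitz_function_values_general hx hy (fun z _ ↦ hdiff z) (fun z _ ↦ hgrad z)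
    fun z _ ↦ hLip z x).trans (by gcongr; exact hbound x hx)
end

section
/- Let η ∈ (0,1) and let (u_k)_{k≥0} and (w_k)_{k≥0} be sequences of positive real numbers such that u_{k+1} ≤ η u_k + w_k for all k ≥ 0. Then for every k ≥ 0: ∑_{l=0}^{k} u_l² ≤ (2/(1−η)²) ∑_{l=0}^{k} w_l² + (2/(1−η²)) u_0². -/
/-!
Since `η * a + b` is the convex combination `η * a + (1 - η) * (b / (1 - η))`, convexity of squaring
turns the recursion into the linear one `u (k + 1) ^ 2 ≤ η * u k ^ 2 + w k ^ 2 / (1 - η)`. Summing a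
linear recursion with contraction factor `η` costs another factor `1 / (1 - η)`, whence the
coefficient `1 / (1 - η) ^ 2`.
-/

section LinearRecursion

variable {R : Type*} [Ring R]

theorem one_sub_mul_sum_range_succ (η : R) (v : ℕ → R) (n : ℕ) :
    (1 - η) * ∑ l ∈ Finset.range (n + 1), v l + η * v n =
      v 0 + ∑ l ∈ Finset.range n, (v (l + 1) - η * v l) := by
  rw [sub_mul, one_mul, Finset.sum_sub_distrib, ← Finset.mul_sum]
  nth_rw 1 [Finset.sum_range_succ']
  rw [Finset.sum_range_succ, mul_add]
  abel

theorem one_sub_mul_sum_range_succ_le [PartialOrder R] [IsOrderedAddMonoid R] {η : R} {v c : ℕ → R}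
    (hrec : ∀ k, v (k + 1) ≤ η * v k + c k) (n : ℕ) :
    (1 - η) * ∑ l ∈ Finset.range (n + 1), v l + η * v n ≤
      v 0 + ∑ l ∈ Finset.range n, c l := by
  rw [one_sub_mul_sum_range_succ]
  gcongr with l
  exact sub_le_iff_le_add'.mpr (hrec l)

end LinearRecursion

section OrderedField

variable {K : Type*} [Field K] [LinearOrder K] [IsStrictOrderedRing K] {η : K}

theorem mul_add_sq_le (hη0 : 0 ≤ η) (hη1 : η < 1) (a b : K) :
    (η * a + b) ^ 2 ≤ η * a ^ 2 + b ^ 2 / (1 - η) := by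
  have h : 0 < 1 - η := sub_pos.mpr hη1
  calc (η * a + b) ^ 2 = (η * a + (1 - η) * (b / (1 - η))) ^ 2 := by
        rw [mul_div_cancel₀ b h.ne']
    _ ≤ η * a ^ 2 + (1 - η) * (b / (1 - η)) ^ 2 :=
        even_two.convexOn_pow.2 trivial trivial hη0 h.le (add_sub_cancel η 1)
    _ = η * a ^ 2 + b ^ 2 / (1 - η) := by field_simp

theorem one_div_one_sub_le_two_div_one_sub_sq (hη : |η| < 1) :
    1 / (1 - η) ≤ 2 / (1 - η ^ 2) := by
  obtain ⟨hneg, hlt⟩ := abs_lt.mp hη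
  have : 0 < 1 - η := sub_pos.mpr hlt
  have : 0 < 1 + η := by linarith
  have partial_fractions : 2 / (1 - η ^ 2) = 1 / (1 - η) + 1 / (1 + η) := by
    rw [show 1 - η ^ 2 = (1 - η) * (1 + η) by ring]
    field_simp
    ring
  rw [partial_fractions]
  exact le_add_of_nonneg_right (by positivity)

theorem recursive_squared_sum_bound_general (hη0 : 0 ≤ η) (hη1 : η < 1) {u w : ℕ → K}
    (hu : ∀ k, 0 ≤ u k) (hrec : ∀ k, u (k + 1) ≤ η * u k + w k) (n : ℕ) :
    ∑ l ∈ Finset.range (n + 1), u l ^ 2 ≤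
      1 / (1 - η) ^ 2 * ∑ l ∈ Finset.range n, w l ^ 2 + 1 / (1 - η) * u 0 ^ 2 := by
  have h : 0 < 1 - η := sub_pos.mpr hη1
  have hsq (k : ℕ) : u (k + 1) ^ 2 ≤ η * u k ^ 2 + w k ^ 2 / (1 - η) :=
    (pow_le_pow_left₀ (hu _) (hrec k) 2).trans (mul_add_sq_le hη0 hη1 _ _)
  calc ∑ l ∈ Finset.range (n + 1), u l ^ 2
      ≤ (u 0 ^ 2 + ∑ l ∈ Finset.range n, w l ^ 2 / (1 - η)) / (1 - η) := by
        rw [le_div_iff₀' h]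
        exact (le_add_of_nonneg_right (by positivity)).trans
          (one_sub_mul_sum_range_succ_le (v := fun k ↦ u k ^ 2) hsq n)
    _ = 1 / (1 - η) ^ 2 * ∑ l ∈ Finset.range n, w l ^ 2 + 1 / (1 - η) * u 0 ^ 2 := by
        rw [← Finset.sum_div]
        field_simp
        ring

end OrderedField

/-- **Recursive bound for squared sums** (Lemma 2 of Xu et al., modified).
If `η ∈ (0,1)` and the positive sequences `u, w` satisfy `u_{k+1} ≤ η u_k + w_k`,
then `∑_{l=0}^k u_l² ≤ (2/(1−η)²) ∑_{l=0}^k w_l² + (2/(1−η²)) u_0²`. -/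
theorem recursive_squared_sum_bound
    (η : ℝ) (hη0 : 0 < η) (hη1 : η < 1)
    (u w : ℕ → ℝ) (hu : ∀ k, 0 < u k) (hw : ∀ k, 0 < w k)
    (hrec : ∀ k, u (k + 1) ≤ η * u k + w k) :
    ∀ k, ∑ l ∈ Finset.range (k + 1), (u l) ^ 2 ≤
      (2 / (1 - η) ^ 2) * ∑ l ∈ Finset.range (k + 1), (w l) ^ 2 +
        (2 / (1 - η ^ 2)) * (u 0) ^ 2 := by
  intro k
  have hη : |η| < 1 := (abs_of_pos hη0).trans_lt hη1
  refine (recursive_squared_sum_bound_general hη0.le hη1 (fun k ↦ (hu k).le) hrec k).trans ?_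
  gcongr ?_ / _ * ∑ l ∈ Finset.range ?_, _ + ?_ * _
  · exact one_le_two
  · exact k.le_succ
  · exact one_div_one_sub_le_two_div_one_sub_sq hη
end

section
/- Let ρ ∈ (0,1), D ≥ 0, b > 0 and p ∈ (0,1], and define β_k := b/(k+1)^p for k ≥ 0. Let (a_k)_{k≥0} be a sequence of nonnegative real numbers satisfying a_{k+1} ≤ ρ a_k + D β_k for all k ≥ 0. Then there exists a constant C > 0 such that a_k ≤ C β_k for all k ≥ 0; in other words, the sequence (a_k/β_k) is bounded. -/
/-!
With `r k = β k / β (k + 1)`, the quotients `u k = a k / β k` satisfy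
`u (k + 1) ≤ (ρ * r k) * u k + D * r k`. As `r k → 1`, the factor `ρ * r k` is eventually at most
some constant `q < 1`, and from then on every large enough upper bound for `u k` is also one for
`u (k + 1)`.
-/

open Filter Topology

theorem bddAbove_range_of_eventually_le_mul_add {u q c : ℕ → ℝ} {r : ℝ} (hr : r < 1)
    (hq : ∀ᶠ k in atTop, q k ∈ Set.Icc 0 r) (hc : IsBoundedUnder (· ≤ ·) atTop c)
    (hu : ∀ᶠ k in atTop, u (k + 1) ≤ q k * u k + c k) : BddAbove (Set.range u) := by
  obtain ⟨B, hB⟩ := hc.eventually_le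
  obtain ⟨N, hN⟩ := eventually_atTop.1 (hq.and (hB.and hu))
  -- `x ↦ r * x + B` has slope less than 1 and fixed point `B / (1 - r)`, beyond which it lies
  -- below the diagonal.
  obtain ⟨M, hM0, huM, hBM⟩ : ∃ M, 0 ≤ M ∧ u N ≤ M ∧ B / (1 - r) ≤ M :=
    ⟨max 0 (max (u N) (B / (1 - r))), by simp⟩
  have hfix : r * M + B ≤ M := by
    rw [div_le_iff₀ (sub_pos.2 hr)] at hBM
    linarith
  have htail : ∀ k ≥ N, u k ≤ M := by
    intro k hk
    induction k, hk using Nat.le_induction with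
    | base => exact huM
    | succ k hk ih =>
      obtain ⟨⟨hq0, hqr⟩, hcB, hstep⟩ := hN k hk
      calc u (k + 1) ≤ q k * u k + c k := hstep
        _ ≤ q k * M + B := by gcongr
        _ ≤ r * M + B := by gcongr
        _ ≤ M := hfix
  exact (isBoundedUnder_of_eventually_le (eventually_atTop.2 ⟨N, htail⟩)).bddAbove_range

theorem exists_pos_forall_le_mul_of_tendsto_ratio {ρ D L : ℝ} {a β : ℕ → ℝ} (hρ : 0 ≤ ρ)
    (hβ : ∀ k, 0 < β k) (hratio : Tendsto (fun k ↦ β k / β (k + 1)) atTop (𝓝 L))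
    (hL : ρ * L < 1) (hrec : ∀ᶠ k in atTop, a (k + 1) ≤ ρ * a k + D * β k) :
    ∃ C > 0, ∀ k, a k ≤ C * β k := by
  obtain ⟨q, hLq, hq⟩ := exists_between hL
  have hfactor : ∀ᶠ k in atTop, ρ * (β k / β (k + 1)) ∈ Set.Icc 0 q := by
    filter_upwards [(hratio.const_mul ρ).eventually_le_const hLq] with k hk
    exact ⟨mul_nonneg hρ (div_pos (hβ k) (hβ (k + 1))).le, hk⟩
  have hquot : ∀ᶠ k in atTop, a (k + 1) / β (k + 1) ≤
      ρ * (β k / β (k + 1)) * (a k / β k) + D * (β k / β (k + 1)) := by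
    filter_upwards [hrec] with k hk
    have := (hβ k).ne'
    calc a (k + 1) / β (k + 1) ≤ (ρ * a k + D * β k) / β (k + 1) :=
          div_le_div_of_nonneg_right hk (hβ (k + 1)).le
      _ = ρ * (β k / β (k + 1)) * (a k / β k) + D * (β k / β (k + 1)) := by field_simp
  obtain ⟨C, hC1, hC⟩ := (bddAbove_range_of_eventually_le_mul_add (u := fun k ↦ a k / β k) hq
    hfactor (hratio.const_mul D).isBoundedUnder_le hquot).exists_ge 1
  exact ⟨C, one_pos.trans_le hC1, fun k ↦ (div_le_iff₀ (hβ k)).1 (hC _ ⟨k, rfl⟩)⟩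

theorem tendsto_div_rpow_ratio {b : ℝ} (hb : b ≠ 0) (p : ℝ) :
    Tendsto (fun k : ℕ ↦ b / ((k : ℝ) + 1) ^ p / (b / (((k + 1 : ℕ) : ℝ) + 1) ^ p)) atTop
      (𝓝 1) := by
  have hbase : Tendsto (fun k : ℕ ↦ 1 + 1 / ((k : ℝ) + 1)) atTop (𝓝 1) := by
    simpa using tendsto_one_div_add_atTop_nhds_zero_nat.const_add (1 : ℝ)
  have hpow := hbase.rpow_const (p := p) (.inl one_ne_zero)
  rw [Real.one_rpow] at hpow
  refine hpow.congr fun k ↦ ?_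
  have hk : (0 : ℝ) < (k : ℝ) + 1 := by positivity
  rw [div_div_div_cancel_left' _ _ hb, ← Real.div_rpow (by positivity) hk.le, Nat.cast_add_one,
    add_div, div_self hk.ne']

theorem contracting_recursion_polynomial_stepsize_general
    {ρ D b p : ℝ} (hρ0 : 0 ≤ ρ) (hρ1 : ρ < 1) (hb : 0 < b)
    {β : ℕ → ℝ} (hβ : ∀ k, β k = b / ((k : ℝ) + 1) ^ p)
    {a : ℕ → ℝ} (hrec : ∀ k, a (k + 1) ≤ ρ * a k + D * β k) :
    ∃ C > 0, ∀ k, a k ≤ C * β k := by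
  have hpos : ∀ k, 0 < β k := fun k ↦ by rw [hβ]; positivity
  have hratio : Tendsto (fun k ↦ β k / β (k + 1)) atTop (𝓝 1) := by
    simpa only [hβ] using tendsto_div_rpow_ratio hb.ne' p
  exact exists_pos_forall_le_mul_of_tendsto_ratio hρ0 hpos hratio (by rwa [mul_one])
    (.of_forall hrec)

/-- **Contracting recursion with polynomially decaying forcing term.**
If `ρ ∈ (0,1)`, `D ≥ 0`, `b > 0`, `p ∈ (0,1]`, `β_k = b/(k+1)^p`, and the nonnegative
sequence `a` satisfies `a_{k+1} ≤ ρ a_k + D β_k`, then there is a constant `C > 0`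
with `a_k ≤ C β_k` for all `k`; i.e. `(a_k/β_k)` is bounded. -/
theorem contracting_recursion_polynomial_stepsize
    (ρ D b p : ℝ) (hρ0 : 0 < ρ) (hρ1 : ρ < 1) (hD : 0 ≤ D) (hb : 0 < b)
    (hp0 : 0 < p) (hp1 : p ≤ 1)
    (β : ℕ → ℝ) (hβ : ∀ k, β k = b / ((k : ℝ) + 1) ^ p)
    (a : ℕ → ℝ) (ha : ∀ k, 0 ≤ a k)
    (hrec : ∀ k, a (k + 1) ≤ ρ * a k + D * β k) :
    ∃ C > 0, ∀ k, a k ≤ C * β k :=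
  contracting_recursion_polynomial_stepsize_general hρ0.le hρ1 hb hβ hrec
end
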